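/- There exists δ > 0 such that for every s ≥ 7, every C with 1/(2Q) ≤ C ≤ 1/2, and every z with 0 ≤ z ≤ C: OPT(1, 1−1/Q, 1−1/Q, 1, C+z, C−z, s) ≤ 3 − δ. -/

import Mathlib

/-- `q(x) = exp(x) - x - 1`. -/
noncomputable def q (x : ℝ) : ℝ := Real.exp x - x - 1

/-- `Q(x) = x·(exp(x) − 1)/(exp(x) − x − 1)`. -/
noncomputable def Qf (x : ℝ) : ℝ := x * (Real.exp x - 1) / (Real.exp x - x - 1)

/-- `OPT(x₀,x₁,x₂,y₀,y₁,y₂,s) = OPT1 · OPT2 · OPT3` with `Q = Q(s)`. -/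
noncomputable def OPT (x₀ x₁ x₂ y₀ y₁ y₂ s : ℝ) : ℝ :=
  ((q (s*x₀) + q (s*x₁) + q (s*x₂)) / q s) *
  (1 / (x₀*y₀ + x₁*y₁ + x₂*y₂)) ^ (Qf s) *
  ((y₀+y₁+y₂) ^ (Qf s) +
    2 * (y₀^2 + y₁^2 + y₂^2 - y₀*y₁ - y₀*y₂ - y₁*y₂) ^ (Qf s / 2))

/-!
Write `Q = Q(s)`, `t = 2C` and `D = 1 + t(1 - 1/Q)`. Since `e⁻ˣ q(x)` increases on `[0, ∞)`, the
first factor is at most `1 + 2 exp(-s/Q)`, and `s/Q = 1 - s/(eˢ - 1)` is nearly `1`.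

As `√(1 - t + t²) ≤ 1 - t(1-t)/2`, the other two factors are together at most
`((1+t)/D)^Q + 2((1 - t(1-t)/2)/D)^Q`. For `t ≥ 1/7` monotonicity of `p ↦ (1 + x/p)^p` reduces this
to `Q = 7`; there the chord bound `1 - t(1-t)/2 ≤ (13+t)/14` makes both bases affine in
`1/(1 + 6t/7)`, so by convexity only the endpoints of the interval matter. For `t ≤ 1/7` the second
base is at most `1/(1 + 1.35t)`, and `Q ≥ 1/t`.
-/

open Real Set

section Exponential

lemma exp_mul_sub_add_one_le_exp (a x : ℝ) : exp a * (x - a + 1) ≤ exp x :=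
  calc exp a * (x - a + 1) ≤ exp a * exp (x - a) := by gcongr; exact add_one_le_exp _
    _ = exp x := by rw [← exp_add, add_sub_cancel]

lemma one_add_div_rpow_le_one_add_div_rpow {p r x : ℝ} (hp : 0 < p) (hpr : p ≤ r) (hx : -p ≤ x) :
    (1 + x / p) ^ p ≤ (1 + x / r) ^ r := by
  have hr : 0 < r := hp.trans_le hpr
  have base_nonneg {c : ℝ} (hc : 0 < c) (hxc : -c ≤ x) : 0 ≤ 1 + x / c := by
    have : -1 ≤ x / c := by rwa [le_div_iff₀ hc, neg_one_mul]
    linarith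
  have hbase := base_nonneg hr (by linarith)
  have bernoulli : 1 + r / p * (x / r) ≤ (1 + x / r) ^ (r / p) :=
    one_add_mul_self_le_rpow_one_add (by linarith) (by rwa [one_le_div hp])
  calc (1 + x / p) ^ p = (1 + r / p * (x / r)) ^ p := by congr 2; field_simp
    _ ≤ ((1 + x / r) ^ (r / p)) ^ p := by
      gcongr
      convert base_nonneg hp hx using 2
      field_simp
    _ = (1 + x / r) ^ r := by rw [← rpow_mul hbase, div_mul_cancel₀ _ hp.ne']

lemma one_add_div_rpow_le_one_add_mul_rpow {a p r t : ℝ} (hp : 0 < p) (hr : 0 < r)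
    (hrt : 1 / r ≤ t) (htp : t ≤ 1 / p) (ha : 0 ≤ a) : (1 + a / p) ^ p ≤ (1 + a * t) ^ r := by
  have ht : 0 < t := (one_div_pos.2 hr).trans_le hrt
  calc (1 + a / p) ^ p ≤ (1 + a / (1 / t)) ^ (1 / t) :=
        one_add_div_rpow_le_one_add_div_rpow hp ((le_one_div hp ht).2 htp) (by linarith)
    _ = (1 + a * t) ^ (1 / t) := by rw [div_div_eq_mul_div, div_one]
    _ ≤ (1 + a * t) ^ r :=
      rpow_le_rpow_of_exponent_le (le_add_of_nonneg_right (by positivity))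
        ((one_div_le hr ht).1 hrt)

end Exponential

section FirstFactor

lemma q_pos {x : ℝ} (hx : x ≠ 0) : 0 < q x := by
  have := add_one_lt_exp hx
  unfold q
  linarith

lemma q_le_exp_sub_mul_q {x y : ℝ} (hx : 0 ≤ x) (hxy : x ≤ y) : q x ≤ exp (x - y) * q y := by
  have tangent : y + 1 ≤ (x + 1) * exp (y - x) :=
    calc y + 1 ≤ (x + 1) * (y - x + 1) := by nlinarith
      _ ≤ (x + 1) * exp (y - x) := by gcongr; exact add_one_le_exp _
  have scaled : exp (x - y) * (y + 1) ≤ x + 1 :=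
    calc exp (x - y) * (y + 1) ≤ exp (x - y) * ((x + 1) * exp (y - x)) := by gcongr
      _ = x + 1 := by rw [mul_left_comm, ← exp_add]; simp
  have shift : exp (x - y) * exp y = exp x := by rw [← exp_add, sub_add_cancel]
  unfold q
  linarith

variable {s : ℝ}

lemma le_Qf (hs : 0 < s) : s ≤ Qf s := by
  have hq : 0 < exp s - s - 1 := q_pos hs.ne'
  unfold Qf
  rw [le_div_iff₀ hq]
  gcongr
  linarith

lemma div_Qf (hs : s ≠ 0) : s / Qf s = 1 - s / (exp s - 1) := by
  have hexp : exp s - 1 ≠ 0 := by rwa [sub_ne_zero, Ne, exp_eq_one_iff]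
  unfold Qf
  field_simp
  ring

lemma le_div_Qf (hs : 7 ≤ s) : 149 / 150 ≤ s / Qf s := by
  have exp_seven : 1051 ≤ exp 7 :=
    calc (1051 : ℝ) ≤ 2.718 ^ 7 := by norm_num
      _ ≤ exp 1 ^ 7 := by have := exp_one_gt_d9; gcongr; linarith
      _ = exp 7 := by rw [← exp_nat_mul]; norm_num
  have exp_ge : 150 * s + 1 ≤ exp s :=
    calc 150 * s + 1 ≤ 1051 * (s - 7 + 1) := by linarith
      _ ≤ exp 7 * (s - 7 + 1) := mul_le_mul_of_nonneg_right exp_seven (by linarith)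
      _ ≤ exp s := exp_mul_sub_add_one_le_exp 7 s
  have : s / (exp s - 1) ≤ 1 / 150 := by
    rw [div_le_div_iff₀ (by linarith) (by norm_num)]
    linarith
  rw [div_Qf (by linarith)]
  linarith

lemma q_mul_one_sub_div_q_le {r : ℝ} (hs : 0 < s) (hr₀ : 0 ≤ r) (hr₁ : r ≤ 1) :
    q (s * (1 - r)) / q s ≤ exp (-(s * r)) := by
  have shift : -(s * r) = s * (1 - r) - s := by ring
  rw [div_le_iff₀ (q_pos hs.ne'), shift]
  exact q_le_exp_sub_mul_q (mul_nonneg hs.le (by linarith))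
    (mul_le_of_le_one_right hs.le (by linarith))

lemma exp_neg_le_of_le {x : ℝ} (hx : 149 / 150 ≤ x) : exp (-x) ≤ 0.3705 := by
  have exp_ge : 2.7 ≤ exp (149 / 150) :=
    calc (2.7 : ℝ) ≤ 2.7182818283 * (149 / 150 - 1 + 1) := by norm_num
      _ ≤ exp 1 * (149 / 150 - 1 + 1) := by gcongr; exact exp_one_gt_d9.le
      _ ≤ exp (149 / 150) := exp_mul_sub_add_one_le_exp 1 _
  calc exp (-x) = (exp x)⁻¹ := exp_neg x
    _ ≤ (exp (149 / 150))⁻¹ := by gcongr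
    _ ≤ 2.7⁻¹ := by gcongr
    _ ≤ 0.3705 := by norm_num

lemma q_sum_div_q_le (hs : 7 ≤ s) :
    (q (s * 1) + q (s * (1 - 1 / Qf s)) + q (s * (1 - 1 / Qf s))) / q s ≤ 1.741 := by
  have hs₀ : 0 < s := by linarith
  have hQ : 7 ≤ Qf s := hs.trans (le_Qf hs₀)
  have ratio_le : q (s * (1 - 1 / Qf s)) / q s ≤ 0.3705 :=
    calc q (s * (1 - 1 / Qf s)) / q s ≤ exp (-(s * (1 / Qf s))) :=
          q_mul_one_sub_div_q_le hs₀ (by positivity) (by rw [div_le_one] <;> linarith)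
      _ = exp (-(s / Qf s)) := by rw [mul_one_div]
      _ ≤ 0.3705 := exp_neg_le_of_le (le_div_Qf hs)
  rw [mul_one, add_div, add_div, div_self (q_pos hs₀.ne').ne']
  linarith

end FirstFactor

section OtherFactors

variable {p Q t : ℝ}

/-- The pairing `x₀y₀ + x₁y₁ + x₂y₂` at `x = (1, 1 - 1/Q, 1 - 1/Q)` and `y = (1, C + z, C - z)`,
expressed through `t = 2C`. -/
noncomputable def pairing (Q t : ℝ) : ℝ := 1 + t * (1 - 1 / Q)

/-- The upper bound for `OPT2 · OPT3` at the same point obtained by replacing the square root of the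
quadratic form with `1 - t(1-t)/2`, where `t = 2C`; it involves only `Q`-th powers. -/
noncomputable def envelope (Q t : ℝ) : ℝ :=
  ((1 + t) / pairing Q t) ^ Q + 2 * ((1 - t * (1 - t) / 2) / pairing Q t) ^ Q

lemma pairing_pos (hQ : 1 ≤ Q) (ht : 0 ≤ t) : 0 < pairing Q t := by
  have : 1 / Q ≤ 1 := by rw [div_le_one] <;> linarith
  unfold pairing
  nlinarith

lemma pairing_mono (hp : 0 < p) (hpQ : p ≤ Q) (ht : 0 ≤ t) : pairing p t ≤ pairing Q t := by
  unfold pairing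
  gcongr

lemma pairing_seven (t : ℝ) : pairing 7 t = 1 + 6 * t / 7 := by
  unfold pairing
  ring

lemma one_add_div_pairing_rpow_anti (hp : 1 ≤ p) (hpQ : p ≤ Q) (ht : 0 ≤ t) :
    ((1 + t) / pairing Q t) ^ Q ≤ ((1 + t) / pairing p t) ^ p := by
  have div_eq_inv {c : ℝ} (hc : 1 ≤ c) :
      (1 + t) / pairing c t = (1 + -(t / (1 + t)) / c)⁻¹ := by
    have := pairing_pos hc ht
    unfold pairing at *
    rw [← inv_div]
    congr 1
    field_simp
    ring
  have base_pos {c : ℝ} (hc : 1 ≤ c) : 0 < 1 + -(t / (1 + t)) / c := by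
    rw [← inv_pos, ← div_eq_inv hc]
    exact div_pos (by linarith) (pairing_pos hc ht)
  have hQ : 1 ≤ Q := hp.trans hpQ
  have hw : t / (1 + t) ≤ 1 := by rw [div_le_one] <;> linarith
  rw [div_eq_inv hp, div_eq_inv hQ, inv_rpow (base_pos hp).le, inv_rpow (base_pos hQ).le]
  have := rpow_pos_of_pos (base_pos hp) p
  gcongr
  exact one_add_div_rpow_le_one_add_div_rpow (by linarith) hpQ (by linarith)

lemma convexOn_affine_div {S : Set ℝ} (hS : Convex ℝ S) (a b c : ℝ) :
    ConvexOn ℝ S fun v ↦ (a + b * v) / c := by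
  refine ⟨hS, fun _ _ _ _ _ _ _ _ hweights ↦ le_of_eq ?_⟩
  simp only [smul_eq_mul]
  linear_combination (-a / c) * hweights

lemma affine_pow_seven_add_le {u : ℝ} (hu : u ∈ Icc (7 / 13 : ℝ) (49 / 55)) :
    ((7 - u) / 6) ^ 7 + 2 * ((7 + 71 * u) / 84) ^ 7 ≤ 1.72 := by
  have hconv : ConvexOn ℝ (Icc (7 / 13 : ℝ) (49 / 55))
      fun v ↦ ((7 + -1 * v) / 6) ^ 7 + 2 * ((7 + 71 * v) / 84) ^ 7 := by
    have hIcc : Convex ℝ (Icc (7 / 13 : ℝ) (49 / 55)) := convex_Icc _ _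
    refine ((convexOn_affine_div hIcc 7 (-1) 6).pow ?_ 7).add
      (((convexOn_affine_div hIcc 7 71 84).pow ?_ 7).smul zero_le_two)
    all_goals
      rintro v ⟨hv₀, hv₁⟩
      linarith
  calc ((7 - u) / 6) ^ 7 + 2 * ((7 + 71 * u) / 84) ^ 7
      = ((7 + -1 * u) / 6) ^ 7 + 2 * ((7 + 71 * u) / 84) ^ 7 := by ring
    _ ≤ _ := hconv.le_max_of_mem_Icc (by norm_num) (by norm_num) hu
    _ ≤ 1.72 := by norm_num

lemma div_pairing_seven_pow_add_le (ht₀ : 1 / 7 ≤ t) (ht₁ : t ≤ 1) :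
    ((1 + t) / pairing 7 t) ^ 7 + 2 * ((13 + t) / 14 / pairing 7 t) ^ 7 ≤ 1.72 := by
  rw [pairing_seven]
  have hD : 0 < 1 + 6 * t / 7 := by linarith
  have first_base : (1 + t) / (1 + 6 * t / 7) = (7 - (1 + 6 * t / 7)⁻¹) / 6 := by
    field_simp
    ring
  have second_base : (13 + t) / 14 / (1 + 6 * t / 7) = (7 + 71 * (1 + 6 * t / 7)⁻¹) / 84 := by
    field_simp
    ring
  rw [first_base, second_base]
  apply affine_pow_seven_add_le
  constructor
  · rw [le_inv_comm₀ (by norm_num) hD]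
    linarith
  · rw [inv_le_comm₀ hD (by norm_num)]
    linarith

lemma envelope_le_of_one_seventh_le (hQ : 7 ≤ Q) (ht₀ : 1 / 7 ≤ t) (ht₁ : t ≤ 1) :
    envelope Q t ≤ 1.72 := by
  have ht : 0 ≤ t := by linarith
  have hD₇ : 0 < pairing 7 t := pairing_pos (by norm_num) ht
  have hD : pairing 7 t ≤ pairing Q t := pairing_mono (by norm_num) hQ ht
  have first : ((1 + t) / pairing Q t) ^ Q ≤ ((1 + t) / pairing 7 t) ^ 7 :=
    mod_cast one_add_div_pairing_rpow_anti (p := 7) (by norm_num) hQ ht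
  have chord : 1 - t * (1 - t) / 2 ≤ (13 + t) / 14 := by nlinarith
  have second : ((1 - t * (1 - t) / 2) / pairing Q t) ^ Q ≤ ((13 + t) / 14 / pairing 7 t) ^ 7 :=
    calc _ ≤ ((13 + t) / 14 / pairing 7 t) ^ Q := by
          gcongr
          exact div_nonneg (by nlinarith) (hD₇.le.trans hD)
      _ ≤ ((13 + t) / 14 / pairing 7 t) ^ (7 : ℝ) := by
        apply rpow_le_rpow_of_exponent_ge (by positivity) _ hQ
        rw [div_le_one hD₇, pairing_seven]
        linarith
      _ = _ := mod_cast rfl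
  calc envelope Q t ≤ ((1 + t) / pairing 7 t) ^ 7 + 2 * ((13 + t) / 14 / pairing 7 t) ^ 7 :=
        add_le_add first (by gcongr)
    _ ≤ 1.72 := div_pairing_seven_pow_add_le ht₀ ht₁

lemma envelope_le_of_le_one_seventh (hQ : 7 ≤ Q) (ht₀ : 1 / Q ≤ t) (ht₁ : t ≤ 1 / 7) :
    envelope Q t ≤ 1.72 := by
  have ht : 0 < t := lt_of_lt_of_le (by positivity) ht₀
  have hD : 1 + 6 * t / 7 ≤ pairing Q t := pairing_seven t ▸ pairing_mono (by norm_num) hQ ht.le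
  have first : ((1 + t) / pairing Q t) ^ Q ≤ (56 / 55) ^ 7 :=
    calc _ ≤ ((1 + t) / pairing 7 t) ^ 7 :=
          mod_cast one_add_div_pairing_rpow_anti (p := 7) (by norm_num) hQ ht.le
      _ ≤ (56 / 55) ^ 7 := by
        have := pairing_pos (Q := 7) (by norm_num) ht.le
        gcongr ?_ ^ 7
        rw [pairing_seven, div_le_div_iff₀ (by linarith) (by norm_num)]
        linarith
  have base_le : (1 - t * (1 - t) / 2) / pairing Q t ≤ (1 + 1.35 * t)⁻¹ := by
    rw [← one_div, div_le_div_iff₀ (by linarith) (by positivity)]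
    nlinarith [mul_pos ht ht, mul_nonneg (mul_pos ht ht).le (sub_nonneg.2 ht₁)]
  have growth : (1 + 1.35 / 7) ^ 7 ≤ (1 + 1.35 * t) ^ Q :=
    mod_cast one_add_div_rpow_le_one_add_mul_rpow (p := 7) (by norm_num) (by linarith) ht₀ ht₁
      (by norm_num)
  have second : ((1 - t * (1 - t) / 2) / pairing Q t) ^ Q ≤ ((1 + 1.35 / 7) ^ 7)⁻¹ :=
    calc _ ≤ ((1 + 1.35 * t)⁻¹) ^ Q := by
          gcongr
          exact div_nonneg (by nlinarith) (by linarith)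
      _ = ((1 + 1.35 * t) ^ Q)⁻¹ := inv_rpow (by positivity) _
      _ ≤ ((1 + 1.35 / 7) ^ 7)⁻¹ := by gcongr
  calc envelope Q t ≤ (56 / 55) ^ 7 + 2 * ((1 + 1.35 / 7) ^ 7)⁻¹ :=
        add_le_add first (by gcongr)
    _ ≤ 1.72 := by norm_num

lemma envelope_le (hQ : 7 ≤ Q) (ht₀ : 1 / Q ≤ t) (ht₁ : t ≤ 1) : envelope Q t ≤ 1.72 := by
  rcases le_total t (1 / 7) with h | h
  · exact envelope_le_of_le_one_seventh hQ ht₀ h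
  · exact envelope_le_of_one_seventh_le hQ h ht₁

lemma rpow_half_le_rpow_of_le_sq {Y m : ℝ} (hY : 0 ≤ Y) (hm : 0 ≤ m) (hYm : Y ≤ m ^ 2)
    (hQ : 0 ≤ Q) : Y ^ (Q / 2) ≤ m ^ Q :=
  calc Y ^ (Q / 2) ≤ (m ^ 2) ^ (Q / 2) := by gcongr
    _ = m ^ Q := by
      rw [← rpow_natCast_mul hm]
      congr 1
      push_cast
      ring

lemma one_sub_sq_add_three_mul_sq_le {C z : ℝ} (hz : z ^ 2 ≤ C ^ 2) :
    (1 - C) ^ 2 + 3 * z ^ 2 ≤ (1 - 2 * C * (1 - 2 * C) / 2) ^ 2 := by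
  nlinarith [sq_nonneg (C * (1 - 2 * C))]

lemma one_div_pairing_rpow_mul_add_le_envelope {C z : ℝ} (hQ : 1 ≤ Q) (hC : 0 ≤ C)
    (hz : z ^ 2 ≤ C ^ 2) :
    (1 / pairing Q (2 * C)) ^ Q * ((1 + 2 * C) ^ Q + 2 * ((1 - C) ^ 2 + 3 * z ^ 2) ^ (Q / 2))
      ≤ envelope Q (2 * C) := by
  have hD : 0 < pairing Q (2 * C) := pairing_pos hQ (by linarith)
  have hm : 0 ≤ 1 - 2 * C * (1 - 2 * C) / 2 := by nlinarith [sq_nonneg (4 * C - 1)]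
  calc _ ≤ (1 / pairing Q (2 * C)) ^ Q
        * ((1 + 2 * C) ^ Q + 2 * (1 - 2 * C * (1 - 2 * C) / 2) ^ Q) := by
        gcongr
        exact rpow_half_le_rpow_of_le_sq (by positivity) hm (one_sub_sq_add_three_mul_sq_le hz)
          (by linarith)
    _ = envelope Q (2 * C) := by
      rw [envelope, div_rpow zero_le_one hD.le, div_rpow (by positivity) hD.le,
        div_rpow hm hD.le, one_rpow]
      ring

end OtherFactors

lemma OPT_one_add_sub_eq (C z s : ℝ) :
    OPT 1 (1 - 1 / Qf s) (1 - 1 / Qf s) 1 (C + z) (C - z) s =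
      (q (s * 1) + q (s * (1 - 1 / Qf s)) + q (s * (1 - 1 / Qf s))) / q s *
        ((1 / pairing (Qf s) (2 * C)) ^ Qf s *
          ((1 + 2 * C) ^ Qf s + 2 * ((1 - C) ^ 2 + 3 * z ^ 2) ^ (Qf s / 2))) := by
  have pairing_eq : 1 * 1 + (1 - 1 / Qf s) * (C + z) + (1 - 1 / Qf s) * (C - z)
      = pairing (Qf s) (2 * C) := by unfold pairing; ring
  have sum_eq : 1 + (C + z) + (C - z) = 1 + 2 * C := by ring
  have form_eq : 1 ^ 2 + (C + z) ^ 2 + (C - z) ^ 2 - 1 * (C + z) - 1 * (C - z)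
      - (C + z) * (C - z) = (1 - C) ^ 2 + 3 * z ^ 2 := by ring
  rw [OPT, pairing_eq, sum_eq, form_eq, mul_assoc]

theorem stmt8 :
    ∃ δ : ℝ, 0 < δ ∧ ∀ s : ℝ, 7 ≤ s →
      ∀ C : ℝ, 1/(2 * Qf s) ≤ C → C ≤ 1/2 →
        ∀ z : ℝ, 0 ≤ z → z ≤ C →
          OPT 1 (1 - 1/(Qf s)) (1 - 1/(Qf s)) 1 (C + z) (C - z) s ≤ 3 - δ := by
  refine ⟨0.005, by norm_num, fun s hs C hC₀ hC₁ z hz₀ hzC ↦ ?_⟩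
  have hQ : 7 ≤ Qf s := hs.trans (le_Qf (by linarith))
  have hC : 0 ≤ C := hz₀.trans hzC
  have hD : 0 < pairing (Qf s) (2 * C) := pairing_pos (by linarith) (by linarith)
  have ht : 1 / Qf s ≤ 2 * C := by
    rw [one_div, mul_inv, ← one_div (Qf s)] at hC₀
    linarith
  have other_factors_le := (one_div_pairing_rpow_mul_add_le_envelope (by linarith) hC
    (by gcongr : z ^ 2 ≤ C ^ 2)).trans (envelope_le hQ ht (by linarith))
  rw [OPT_one_add_sub_eq]
  calc _ ≤ 1.741 * (1.72 : ℝ) :=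
        mul_le_mul (q_sum_div_q_le hs) other_factors_le (by positivity) (by norm_num)
    _ ≤ 3 - 0.005 := by norm_num
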